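/- arXiv:2010.10813 — 5 statements merged into one kernel-verified Lean document; each statement's English description precedes it below -/
import Mathlib

section
/- Let p : List Γ → ℝ and define B(u) := Σ_{g ∈ Seg(u)} Π_{s ∈ g} p(s) for u : List Γ, so that B([]) = 1. Then for every nonempty word u of length i ≥ 1, the forward recursion B(u) = Σ_{k=0}^{i−1} B(u.take k) · p(u.drop k) holds, i.e. the total segmentation weight of u equals the sum over the position k of the last cut of the weight of the prefix of length k times the weight of the final segment. (Equation (9) of the paper, correctness of the forward dynamic program for b_{1,i}.) -/
open scoped Classical

variable {Γ : Type*}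

/-- A segmentation of a word `w` is a list of nonempty subwords whose concatenation is `w`. -/
def Seg (w : List Γ) : Set (List (List Γ)) :=
  {g | (∀ s ∈ g, s ≠ []) ∧ g.flatten = w}

theorem Seg.finite (w : List Γ) : (Seg w).Finite := by
  apply Set.Finite.subset
    (Set.finite_range fun c : Composition w.length => w.splitWrtComposition c)
  rintro g ⟨hne, hjoin⟩
  subst hjoin
  have hpos : ∀ {i : ℕ}, i ∈ g.map List.length → 0 < i := by
    intro i hi
    simp only [List.mem_map] at hi
    obtain ⟨s, hs, rfl⟩ := hi
    exact List.length_pos_iff.mpr (hne s hs)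
  refine ⟨⟨g.map List.length, hpos, by simp⟩, ?_⟩
  exact (List.splitWrtComposition_flatten g ⟨g.map List.length, hpos, by simp⟩ rfl)

/-- The (finite) set of segmentations of `w`, as a `Finset`. -/
noncomputable def SegF (w : List Γ) : Finset (List (List Γ)) := (Seg.finite w).toFinset

/-- Total segmentation weight `B(u) = Σ_{g ∈ Seg(u)} Π_{s ∈ g} p(s)`. -/
noncomputable def B (p : List Γ → ℝ) (u : List Γ) : ℝ :=
  ∑ g ∈ SegF u, (g.map p).prod

/-- Equation (9): forward recursion for the total segmentation weight. -/
theorem B_forward_recursion (p : List Γ → ℝ) (u : List Γ) (hu : u ≠ []) :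
    B p u = ∑ k ∈ Finset.range u.length, B p (u.take k) * p (u.drop k) := by
  unfold B
  simp_rw [Finset.sum_mul]
  rw [Finset.sum_sigma']
  symm
  refine Finset.sum_bij (fun x _ => x.2 ++ [u.drop x.1]) ?_ ?_ ?_ ?_
  · rintro ⟨k, g⟩ h
    simp only [Finset.mem_sigma, Finset.mem_range, SegF, Set.Finite.mem_toFinset, Seg,
      Set.mem_setOf_eq] at h ⊢
    obtain ⟨hk, hne, hj⟩ := h
    refine ⟨?_, by simp [hj]⟩
    intro s hs
    rcases List.mem_append.1 hs with hs | hs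
    · exact hne s hs
    · rw [List.mem_singleton.1 hs]
      intro h0
      have := List.drop_eq_nil_iff.1 h0
      omega
  · rintro ⟨k, g⟩ h ⟨k', g'⟩ h' e
    simp only [Finset.mem_sigma, Finset.mem_range] at h h'
    obtain ⟨e1, e2⟩ := List.append_inj' e rfl
    have e3 := congrArg List.length (List.singleton_inj.1 e2)
    simp only [List.length_drop] at e3
    have e4 : k = k' := by omega
    simp only at e1
    subst e1 e4
    rfl
  · intro g hg
    simp only [SegF, Set.Finite.mem_toFinset, Seg, Set.mem_setOf_eq] at hg
    obtain ⟨hne, hj⟩ := hg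
    rcases List.eq_nil_or_concat' g with rfl | ⟨g', s, rfl⟩
    · exact absurd hj.symm hu
    · have hs : 0 < s.length := List.length_pos_iff.2 (hne s (by simp))
      have hj' : g'.flatten ++ s = u := by simpa using hj
      subst hj'
      refine ⟨⟨g'.flatten.length, g'⟩, ?_, ?_⟩
      · simp only [Finset.mem_sigma, Finset.mem_range, SegF, Set.Finite.mem_toFinset, Seg,
          Set.mem_setOf_eq]
        refine ⟨by rw [List.length_append]; omega, fun t ht => hne t (by simp [ht]), ?_⟩
        rw [List.take_left]
      · simp only [List.drop_left]
  · rintro ⟨k, g⟩ _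
    simp
end

section
/- Let p : List Γ → ℝ and define B(u) := Σ_{g ∈ Seg(u)} Π_{s ∈ g} p(s) for u : List Γ, so that B([]) = 1. Then for every nonempty word u of length i ≥ 1, the backward recursion B(u) = Σ_{k=1}^{i} p(u.take k) · B(u.drop k) holds, i.e. the total segmentation weight of u equals the sum over the length k of the first segment of the weight of that segment times the weight of the remaining suffix. (The mirror recursion for b_{j,l} used in Algorithm 1.) -/
open scoped Classical

variable {Γ : Type*}

/-- Backward recursion for the total segmentation weight (mirror of Eq. (9)). -/
theorem B_backward_recursion (p : List Γ → ℝ) (u : List Γ) (hu : u ≠ []) :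
    B p u = ∑ k ∈ Finset.Icc 1 u.length, p (u.take k) * B p (u.drop k) := by
  have mem : ∀ (w : List Γ) (g : List (List Γ)),
      g ∈ SegF w ↔ (∀ s ∈ g, s ≠ []) ∧ g.flatten = w := by
    intro w g
    simp [SegF, Seg]
  unfold B
  simp_rw [Finset.mul_sum]
  rw [Finset.sum_sigma']
  symm
  refine Finset.sum_bij (fun x _ => u.take x.1 :: x.2) ?_ ?_ ?_ ?_
  · rintro ⟨k, g⟩ h
    simp only [Finset.mem_sigma, Finset.mem_Icc, mem] at h
    obtain ⟨⟨h1, h2⟩, h3, h4⟩ := h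
    rw [mem]
    refine ⟨?_, ?_⟩
    · intro s hs
      rcases List.mem_cons.mp hs with rfl | hs
      · intro h0
        have := congrArg List.length h0
        simp only [List.length_take, List.length_nil] at this
        omega
      · exact h3 s hs
    · simp only [List.flatten_cons, h4, List.take_append_drop]
  · rintro ⟨k, g⟩ h ⟨k', g'⟩ h' heq
    simp only [Finset.mem_sigma, Finset.mem_Icc] at h h'
    simp only [List.cons.injEq] at heq
    obtain ⟨ht, rfl⟩ := heq
    have := congrArg List.length ht
    simp only [List.length_take] at this
    have hk : k = k' := by omega
    subst hk
    rfl
  · intro g hg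
    rw [mem] at hg
    obtain ⟨hne, hj⟩ := hg
    cases g with
    | nil => exact absurd hj.symm hu
    | cons s g =>
      subst hj
      have hs : 0 < s.length := List.length_pos_iff.mpr (hne s (by simp))
      refine ⟨⟨s.length, g⟩, ?_, ?_⟩
      · simp only [Finset.mem_sigma, Finset.mem_Icc, mem]
        refine ⟨⟨hs, by simp⟩, fun t ht => hne t (List.mem_cons_of_mem _ ht), by simp⟩
      · simp
  · rintro ⟨k, g⟩ h
    simp
end

section
/- Let w : List Γ have length l and let 0 ≤ i < j ≤ l. The set of segmentations of w that contain the substring w[i+1:j] := (w.drop i).take (j−i) as a single segment with cuts exactly at positions i and j (i.e. segmentations of the form g₁ ++ [w[i+1:j]] ++ g₂ where g₁ is a segmentation of the length-i prefix and g₂ is a segmentation of the suffix after position j) is in bijection with Seg(w.take i) × Seg(w.drop j), the bijection being (g₁, g₂) ↦ g₁ ++ [w[i+1:j]] ++ g₂. (The three-part decomposition of segmentations through a fixed edge of the subword transition graph, Section 3.2.) -/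
open scoped Classical

variable {Γ : Type*}

theorem Seg.prefix_eq {g g' r r' : List (List Γ)} {u : List Γ}
    (h : g ∈ Seg u) (h' : g' ∈ Seg u) (he : g ++ r = g' ++ r') : g = g' := by
  have key : ∀ a b : List (List Γ), a ∈ Seg u → a ++ b ∈ Seg u → b = [] := by
    intro a b ha hab
    have h1 : a.flatten ++ b.flatten = a.flatten := by
      rw [← List.flatten_append, hab.2, ha.2]
    have h2 : b.flatten = [] := by simpa using h1
    rw [List.flatten_eq_nil_iff] at h2
    apply List.eq_nil_iff_forall_not_mem.mpr
    intro s hs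
    exact hab.1 s (List.mem_append_right _ hs) (h2 s hs)
  rcases List.append_eq_append_iff.mp he with ⟨b, hb, _⟩ | ⟨b, hb, _⟩
  · have := key g b h (hb ▸ h')
    simp [hb, this]
  · have := key g' b h' (hb ▸ h)
    simp [hb, this]

/-- Three-part decomposition: segmentations of `w` that contain `w[i+1:j]` as a single
segment with cuts exactly at positions `i` and `j` are in bijection with
`Seg (w.take i) × Seg (w.drop j)` via `(g₁, g₂) ↦ g₁ ++ [w[i+1:j]] ++ g₂`. -/
theorem seg_through_edge_bijOn (w : List Γ) (i j : ℕ) (hij : i < j) (hj : j ≤ w.length) :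
    Set.BijOn
      (fun q : List (List Γ) × List (List Γ) =>
        q.1 ++ [(w.drop i).take (j - i)] ++ q.2)
      (Seg (w.take i) ×ˢ Seg (w.drop j))
      {g ∈ Seg w | ∃ g₁ ∈ Seg (w.take i), ∃ g₂ ∈ Seg (w.drop j),
        g = g₁ ++ [(w.drop i).take (j - i)] ++ g₂} := by
  refine ⟨?_, ?_, ?_⟩
  · rintro ⟨g₁, g₂⟩ ⟨h₁, h₂⟩
    refine ⟨⟨?_, ?_⟩, g₁, h₁, g₂, h₂, rfl⟩
    · intro s hs
      simp only [List.mem_append, List.mem_singleton] at hs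
      rcases hs with (hs | hs) | hs
      · exact h₁.1 s hs
      · rw [hs, ← List.length_pos_iff, List.length_take, List.length_drop]
        omega
      · exact h₂.1 s hs
    · have e₁ : g₁.flatten = w.take i := h₁.2
      have e₂ : g₂.flatten = w.drop j := h₂.2
      have e₃ : w.drop j = (w.drop i).drop (j - i) := by
        rw [List.drop_drop]
        congr 1
        omega
      simp only [List.flatten_append, List.flatten_singleton, e₁, e₂]
      rw [e₃, List.append_assoc, List.take_append_drop, List.take_append_drop]
  · rintro ⟨g₁, g₂⟩ ⟨h₁, h₂⟩ ⟨g₁', g₂'⟩ ⟨h₁', h₂'⟩ he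
    simp only [List.append_assoc] at he
    have e : g₁ = g₁' := Seg.prefix_eq h₁ h₁' he
    subst e
    simpa using he
  · rintro g ⟨_, g₁, h₁, g₂, h₂, rfl⟩
    exact ⟨(g₁, g₂), ⟨h₁, h₂⟩, rfl⟩
end

section
/- Let p : List Γ → ℝ, let w : List Γ have length l, and let 0 ≤ i < j ≤ l. Then the sum, over all segmentations g of w that contain the substring w[i+1:j] as a single segment with cuts exactly at positions i and j, of the product Π_{s ∈ g} p(s), equals p(w[i+1:j]) · B(w.take i) · B(w.drop j). (The unnormalized subword-weight formula ã = p_s · b_{1,i−1} · b_{j+1,l} of Section 3.2.) -/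
open scoped Classical

variable {Γ : Type*}

/-- A segmentation has no proper extension that is a segmentation of the same word. -/
theorem Seg.ext_nil {u : List Γ} {g a : List (List Γ)} (hg : g ∈ Seg u)
    (hga : g ++ a ∈ Seg u) : a = [] := by
  obtain ⟨_, h1⟩ := hg
  obtain ⟨h2, h3⟩ := hga
  rw [List.flatten_append, h1] at h3
  have h4 : a.flatten = [] := by simpa using h3
  rw [List.flatten_eq_nil_iff] at h4
  apply List.eq_nil_iff_forall_not_mem.mpr
  intro s hs
  exact h2 s (List.mem_append_right _ hs) (h4 s hs)

theorem Seg.prefix_unique {u : List Γ} {g g' b b' : List (List Γ)} (hg : g ∈ Seg u)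
    (hg' : g' ∈ Seg u) (h : g ++ b = g' ++ b') : g = g' ∧ b = b' := by
  have : g = g' := by
    rcases List.append_eq_append_iff.mp h with ⟨a, ha, _⟩ | ⟨a, ha, _⟩
    · subst ha
      simp [Seg.ext_nil hg hg']
    · subst ha
      simp [Seg.ext_nil hg' hg]
  subst this
  exact ⟨rfl, List.append_cancel_left h⟩

/-- The unnormalized subword-weight formula `ã = p_s · b_{1,i−1} · b_{j+1,l}`:
the total weight of segmentations of `w` passing through the edge `(i, j)`
equals `p (w[i+1:j]) * B (w.take i) * B (w.drop j)`. -/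
theorem sum_through_edge (p : List Γ → ℝ) (w : List Γ) (i j : ℕ)
    (hij : i < j) (hj : j ≤ w.length) :
    ∑ g ∈ (SegF w).filter (fun g => ∃ g₁ ∈ Seg (w.take i), ∃ g₂ ∈ Seg (w.drop j),
        g = g₁ ++ [(w.drop i).take (j - i)] ++ g₂), (g.map p).prod
      = p ((w.drop i).take (j - i)) * B p (w.take i) * B p (w.drop j) := by
  set s := (w.drop i).take (j - i) with hs
  have hsne : s ≠ [] := by
    intro h
    have := congrArg List.length h
    simp [hs] at this
    omega
  have hw : w.take i ++ (s ++ w.drop j) = w := by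
    have h1 : w.drop j = (w.drop i).drop (j - i) := by
      rw [List.drop_drop]
      congr 1
      omega
    rw [h1, hs, List.take_append_drop, List.take_append_drop]
  have hmem : ∀ (u : List Γ) (g : List (List Γ)), g ∈ SegF u ↔ g ∈ Seg u := by
    intro u g
    simp [SegF]
  have hset : (SegF w).filter (fun g => ∃ g₁ ∈ Seg (w.take i), ∃ g₂ ∈ Seg (w.drop j),
        g = g₁ ++ [s] ++ g₂)
      = (SegF (w.take i) ×ˢ SegF (w.drop j)).image (fun x => x.1 ++ [s] ++ x.2) := by
    ext g
    simp only [Finset.mem_filter, Finset.mem_image, Finset.mem_product, Prod.exists, hmem]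
    constructor
    · rintro ⟨_, g₁, h₁, g₂, h₂, rfl⟩
      exact ⟨g₁, g₂, ⟨h₁, h₂⟩, rfl⟩
    · rintro ⟨g₁, g₂, ⟨h₁, h₂⟩, rfl⟩
      refine ⟨⟨?_, ?_⟩, g₁, h₁, g₂, h₂, rfl⟩
      · intro t ht
        simp only [List.mem_append, List.mem_singleton] at ht
        rcases ht with (ht | rfl) | ht
        · exact h₁.1 t ht
        · exact hsne
        · exact h₂.1 t ht
      · have e₁ := h₁.2
        have e₂ := h₂.2
        simp only [List.flatten_append, List.flatten_singleton, e₁, e₂, List.append_assoc]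
        exact hw
  rw [hset, Finset.sum_image, Finset.sum_product, B, B, mul_assoc, Finset.sum_mul_sum,
    Finset.mul_sum]
  · refine Finset.sum_congr rfl fun g₁ _ => ?_
    rw [Finset.mul_sum]
    refine Finset.sum_congr rfl fun g₂ _ => ?_
    simp only [List.map_append, List.prod_append, List.map_cons, List.map_nil,
      List.prod_singleton]
    ring
  · rintro ⟨g₁, g₂⟩ hx ⟨g₁', g₂'⟩ hy hxy
    simp only [Finset.coe_product, Set.mem_prod, Finset.mem_coe, hmem] at hx hy
    simp only [List.append_assoc] at hxy
    obtain ⟨h1, h2⟩ := Seg.prefix_unique hx.1 hy.1 hxy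
    simp at h2
    rw [h1, h2]
end

section
/- Let p : List Γ → ℝ, let w : List Γ have length l, and fix a string s : List Γ. Then Σ_{g ∈ Seg(w)} (Π_{t ∈ g} p(t)) · (number of entries of g equal to s) = Σ_{0 ≤ i < j ≤ l, w[i+1:j] = s} p(s) · B(w.take i) · B(w.drop j), i.e. the segmentation-weight of s accumulated over all occurrences (counted with multiplicity, as a subword may occur several times in w) equals the sum of the unnormalized weights ã over all positions (i, j) at which s occurs as a substring of w. (Correctness of the aggregation step, lines 8–11 of Algorithm 1.) -/
open scoped Classical

variable {Γ : Type*}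

theorem count_eq_sum_aux {α : Type*} [BEq α] [LawfulBEq α] (a : α) (l : List α) :
    l.count a = ((Finset.range l.length).filter (fun k => l[k]? = some a)).card := by
  rw [Finset.card_filter]
  induction l with
  | nil => simp
  | cons b l ih =>
    rw [List.length_cons, Finset.sum_range_succ', List.count_cons, ih]
    simp

theorem mem_SegF_aux {w : List Γ} {g : List (List Γ)} :
    g ∈ SegF w ↔ (∀ s ∈ g, s ≠ []) ∧ g.flatten = w := by
  simp [SegF, Seg]

theorem split_aux {α : Type*} {g : List α} {k : ℕ} {s : α} (h : g[k]? = some s) :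
    g = g.take k ++ s :: g.drop (k+1) := by
  obtain ⟨hk, rfl⟩ := List.getElem?_eq_some_iff.1 h
  simp

/-- Correctness of the aggregation step (lines 8–11 of Algorithm 1): the
segmentation weight of `s` accumulated with multiplicity equals the sum of the
unnormalized weights over all positions at which `s` occurs as a substring. -/
theorem subword_weight_aggregation [DecidableEq Γ] (p : List Γ → ℝ) (w : List Γ)
    (s : List Γ) :
    ∑ g ∈ SegF w, (g.map p).prod * (g.count s : ℝ)
      = ∑ q ∈ (Finset.range (w.length + 1) ×ˢ Finset.range (w.length + 1)).filter
          (fun q => q.1 < q.2 ∧ (w.drop q.1).take (q.2 - q.1) = s),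
          p s * B p (w.take q.1) * B p (w.drop q.2) := by
  have hL : ∀ g ∈ SegF w, (g.map p).prod * (g.count s : ℝ)
      = ∑ k ∈ (Finset.range g.length).filter (fun k => g[k]? = some s), (g.map p).prod := by
    intro g _
    rw [count_eq_sum_aux, Finset.sum_const, nsmul_eq_mul, mul_comm]
    congr!
  have hR : ∀ q : ℕ × ℕ, p s * B p (w.take q.1) * B p (w.drop q.2)
      = ∑ x ∈ SegF (w.take q.1) ×ˢ SegF (w.drop q.2),
          p s * (x.1.map p).prod * (x.2.map p).prod := by
    intro q
    rw [Finset.sum_product, B, B, mul_assoc, Finset.sum_mul_sum, Finset.mul_sum]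
    refine Finset.sum_congr rfl fun x _ => ?_
    rw [Finset.mul_sum]
    exact Finset.sum_congr rfl fun y _ => (mul_assoc _ _ _).symm
  rw [Finset.sum_congr rfl hL, Finset.sum_congr rfl (fun q _ => hR q),
    Finset.sum_sigma', Finset.sum_sigma']
  refine Finset.sum_bij'
    (fun x _ => ⟨((x.1.take x.2).flatten.length, (x.1.take x.2).flatten.length + s.length),
      (x.1.take x.2, x.1.drop (x.2+1))⟩)
    (fun y _ => ⟨y.2.1 ++ s :: y.2.2, y.2.1.length⟩) ?_ ?_ ?_ ?_ ?_
  · rintro ⟨g, k⟩ h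
    simp only [Finset.mem_sigma, mem_SegF_aux, Finset.mem_filter, Finset.mem_range] at h
    obtain ⟨⟨hne, hw⟩, hk, hs⟩ := h
    have hg := split_aux hs
    have hsne : s ≠ [] := hne s (List.mem_of_getElem? hs)
    have hspos := List.length_pos_iff.2 hsne
    have hw' : w = (g.take k).flatten ++ (s ++ (g.drop (k+1)).flatten) := by
      rw [← hw]
      conv_lhs => rw [hg]
      rw [List.flatten_append, List.flatten_cons]
    simp only [Finset.mem_sigma, mem_SegF_aux, Finset.mem_filter, Finset.mem_product,
      Finset.mem_range]
    have h1 : ∀ t ∈ g.take k, t ≠ [] := fun t ht => hne t (List.mem_of_mem_take ht)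
    have h2 : ∀ t ∈ g.drop (k+1), t ≠ [] := fun t ht => hne t (List.mem_of_mem_drop ht)
    generalize g.take k = g1 at *
    generalize g.drop (k+1) = g2 at *
    have hlen := congrArg List.length hw'
    simp only [List.length_append] at hlen
    refine ⟨⟨⟨by omega, by omega⟩, by omega, ?_⟩, ⟨h1, ?_⟩, h2, ?_⟩
    · rw [hw', List.drop_left]; simp
    · rw [hw', List.take_left]
    · rw [hw', ← List.append_assoc, ← List.length_append, List.drop_left]
  · rintro ⟨⟨i, j⟩, g1, g2⟩ h
    simp only [Finset.mem_sigma, mem_SegF_aux, Finset.mem_filter, Finset.mem_product,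
      Finset.mem_range] at h
    obtain ⟨⟨⟨hi, hj⟩, hij, hs⟩, ⟨h1, hf1⟩, h2, hf2⟩ := h
    have hsne : s ≠ [] := by
      rw [← List.length_pos_iff, ← hs, List.length_take, List.length_drop]; omega
    simp only [Finset.mem_sigma, mem_SegF_aux, Finset.mem_filter, Finset.mem_range]
    refine ⟨⟨?_, ?_⟩, by simp, by simp⟩
    · intro t ht
      rcases List.mem_append.1 ht with ht | ht
      · exact h1 t ht
      · rcases List.mem_cons.1 ht with rfl | ht
        · exact hsne
        · exact h2 t ht
    · rw [List.flatten_append, List.flatten_cons, hf1, hf2, ← hs]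
      have : w.drop j = (w.drop i).drop (j - i) := by
        rw [List.drop_drop]; congr 1; omega
      rw [this, List.take_append_drop, List.take_append_drop]
  · rintro ⟨g, k⟩ h
    simp only [Finset.mem_sigma, Finset.mem_filter, Finset.mem_range] at h
    obtain ⟨_, hk, hs⟩ := h
    have hg := split_aux hs
    simp only [← hg, List.length_take, min_eq_left hk.le]
  · rintro ⟨⟨i, j⟩, g1, g2⟩ h
    simp only [Finset.mem_sigma, mem_SegF_aux, Finset.mem_filter, Finset.mem_product,
      Finset.mem_range] at h
    obtain ⟨⟨⟨hi, hj⟩, hij, hs⟩, ⟨h1, hf1⟩, h2, hf2⟩ := h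
    have e1 : g1.flatten.length = i := by rw [hf1, List.length_take]; omega
    have e2 : i + s.length = j := by
      rw [← hs, List.length_take, List.length_drop]; omega
    have e3 : (g1 ++ s :: g2).take g1.length = g1 := List.take_left
    have e4 : (g1 ++ s :: g2).drop (g1.length + 1) = g2 := by simp
    simp only [e3, e4, e1, e2]
  · rintro ⟨g, k⟩ h
    simp only [Finset.mem_sigma, Finset.mem_filter, Finset.mem_range] at h
    have hg := split_aux h.2.2
    simp only
    conv_lhs => rw [hg]
    rw [List.map_append, List.prod_append, List.map_cons, List.prod_cons]
    ring
end
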